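/- arXiv:2407.18800 — 7 statements merged into one kernel-verified Lean document; each statement's English description precedes it below -/
import Mathlib

section
/- Let T be a proper subgraph of a finite simple graph G and let L be a list assignment for G. If G is T-critical с respect to L, then the graph G − V(T) is s-irreducible for the function s defined by s(v) = |L(v)| − d_T(v) for every v ∈ V(G) \ V(T), where d_T(v) is the number of neighbors of v in T. -/
/-- A graph `K` is `s`-reducible (for list sizes given by `s : W → ℤ`):
there is a proper subgraph `H ⊊ K` such that for every list assignment `L`
with `|L(v)| ≥ s(v)` for all `v`, if `H` is `L`-colorable then `K` is `L`-colorable. -/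
def SReducibleZ {W : Type*} (K : SimpleGraph W) (s : W → ℤ) : Prop :=
  ∃ H : K.Subgraph, H ≠ ⊤ ∧ ∀ L : W → Finset ℕ, (∀ v, s v ≤ ((L v).card : ℤ)) →
    (∃ φ : W → ℕ, (∀ v ∈ H.verts, φ v ∈ L v) ∧ ∀ ⦃u v⦄, H.Adj u v → φ u ≠ φ v) →
    (∃ φ : W → ℕ, (∀ v, φ v ∈ L v) ∧ ∀ ⦃u v⦄, K.Adj u v → φ u ≠ φ v)

/-- `G` is `T`-critical with respect to `L`: `T` is a proper subgraph of `G`, and for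
every proper subgraph `G' ⊊ G` with `T ⊆ G'`, some `L`-coloring of `T` extends to an
`L`-coloring of `G'` but does not extend to an `L`-coloring of `G`. -/
def TCritical {V : Type*} (G : SimpleGraph V) (T : G.Subgraph) (L : V → Finset ℕ) : Prop :=
  T ≠ ⊤ ∧ ∀ G' : G.Subgraph, T ≤ G' → G' ≠ ⊤ →
    ∃ ψ : V → ℕ, (∀ v ∈ T.verts, ψ v ∈ L v) ∧ (∀ ⦃u v⦄, T.Adj u v → ψ u ≠ ψ v) ∧
      (∃ φ : V → ℕ, (∀ v ∈ G'.verts, φ v ∈ L v) ∧ (∀ ⦃u v⦄, G'.Adj u v → φ u ≠ φ v) ∧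
        ∀ v ∈ T.verts, φ v = ψ v) ∧
      ¬ ∃ φ : V → ℕ, (∀ v, φ v ∈ L v) ∧ (∀ ⦃u v⦄, G.Adj u v → φ u ≠ φ v) ∧
        ∀ v ∈ T.verts, φ v = ψ v

/-- If `G` is `T`-critical with respect to `L`, then `G − V(T)` is `s`-irreducible,
where `s(v) = |L(v)| − d_T(v)` and `d_T(v)` is the number of neighbors of `v` in `T`. -/
theorem tCritical_imp_irreducible {V : Type*} [Fintype V] (G : SimpleGraph V)
    (T : G.Subgraph) (L : V → Finset ℕ) (hcrit : TCritical G T L) :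
    ¬ SReducibleZ (G.induce ((T.verts)ᶜ : Set V))
        (fun v => ((L v.val).card : ℤ) - ({u | u ∈ T.verts ∧ G.Adj u v.val}.ncard : ℤ)) := by
  classical
  rintro ⟨H, hH, hred⟩
  obtain ⟨-, hc⟩ := hcrit
  let G' : G.Subgraph :=
    { verts := {v | ∀ hv : v ∈ (T.verts)ᶜ, (⟨v, hv⟩ : ((T.verts)ᶜ : Set V)) ∈ H.verts}
      Adj := fun u v => G.Adj u v ∧
        (∀ hv : u ∈ (T.verts)ᶜ, (⟨u, hv⟩ : ((T.verts)ᶜ : Set V)) ∈ H.verts) ∧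
        (∀ hv : v ∈ (T.verts)ᶜ, (⟨v, hv⟩ : ((T.verts)ᶜ : Set V)) ∈ H.verts) ∧
        (∀ (hu : u ∈ (T.verts)ᶜ) (hv : v ∈ (T.verts)ᶜ), H.Adj ⟨u, hu⟩ ⟨v, hv⟩)
      adj_sub := fun h => h.1
      edge_vert := fun h => h.2.1
      symm := ⟨fun u v h => ⟨h.1.symm, h.2.2.1, h.2.1, fun hu hv => (h.2.2.2 hv hu).symm⟩⟩ }
  have hTG : T ≤ G' := by
    refine ⟨fun v hv hn => absurd hv hn, fun u v h => ?_⟩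
    have hu := T.edge_vert h
    have hv := T.edge_vert h.symm
    exact ⟨h.adj_sub, fun hn => absurd hu hn, fun hn => absurd hv hn,
      fun hn => absurd hu hn⟩
  have hne : G' ≠ ⊤ := by
    intro h
    apply hH
    have hverts : ∀ v, v ∈ G'.verts := by intro v; rw [h]; trivial
    have hadj : ∀ u v, G.Adj u v → G'.Adj u v := by intro u v huv; rw [h]; exact huv
    ext u v
    · exact ⟨fun _ => trivial, fun _ => hverts u.1 u.2⟩
    · exact ⟨fun h => h.adj_sub, fun h => (hadj u.1 v.1 h).2.2.2 u.2 v.2⟩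
  obtain ⟨ψ, -, -, ⟨φ, hφL, hφ, hφψ⟩, hno⟩ := hc G' hTG hne
  apply hno
  let N : V → Finset V := fun v => Finset.univ.filter (fun u => u ∈ T.verts ∧ G.Adj u v)
  obtain ⟨χ, hχL, hχ⟩ := hred (fun v => L v.1 \ (N v.1).image φ) (by
      intro v
      have h1 : {u | u ∈ T.verts ∧ G.Adj u v.val}.ncard = (N v.1).card := by
        rw [← Set.ncard_coe_finset]
        congr 1
        ext u
        simp [N]
      have h2 := Finset.le_card_sdiff ((N v.1).image φ) (L v.1)
      have h3 : ((N v.1).image φ).card ≤ (N v.1).card := Finset.card_image_le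
      simp only [h1]
      omega)
    ⟨fun v => φ v.1, by
      intro v hv
      have hv' : v.1 ∈ G'.verts := fun _ => hv
      refine Finset.mem_sdiff.2 ⟨hφL _ hv', fun hm => ?_⟩
      obtain ⟨u, hu, hue⟩ := Finset.mem_image.1 hm
      obtain ⟨huT, huv⟩ := (Finset.mem_filter.1 hu).2
      exact hφ (u := u) (v := v.1)
        ⟨huv, fun hn => absurd huT hn, hv', fun hn => absurd huT hn⟩ hue, by
      intro u v huv
      exact hφ (u := u.1) (v := v.1)
        ⟨huv.adj_sub, fun _ => H.edge_vert huv, fun _ => H.edge_vert huv.symm, fun _ _ => huv⟩⟩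
  have key : ∀ (u v : V) (hu : u ∈ T.verts) (hv : v ∈ (T.verts)ᶜ), G.Adj u v →
      φ u ≠ χ ⟨v, hv⟩ := by
    intro u v hu hv huv he
    refine (Finset.mem_sdiff.1 (hχL ⟨v, hv⟩)).2 (Finset.mem_image.2 ⟨u, ?_, he⟩)
    exact Finset.mem_filter.2 ⟨Finset.mem_univ _, hu, huv⟩
  refine ⟨fun v => if hv : v ∈ T.verts then φ v else χ ⟨v, hv⟩, ?_, ?_, ?_⟩
  · intro v
    by_cases hv : v ∈ T.verts
    · simp only [hv, dite_true]
      exact hφL v (hTG.1 hv)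
    · simp only [hv, dite_false]
      exact (Finset.mem_sdiff.1 (hχL ⟨v, hv⟩)).1
  · intro u v huv
    by_cases hu : u ∈ T.verts <;> by_cases hv : v ∈ T.verts <;>
      simp only [hu, hv, dite_true, dite_false]
    · exact hφ ⟨huv, fun hn => absurd hu hn, fun hn => absurd hv hn, fun hn => absurd hu hn⟩
    · exact key u v hu hv huv
    · exact (key v u hv hu huv.symm).symm
    · exact hχ (u := ⟨u, hu⟩) (v := ⟨v, hv⟩) huv
  · intro v hv
    simp only [hv, dite_true]
    exact hφψ v hv
end

section
/- Let G be a finite simple graph and s : V(G) → ℕ. Let G' be an induced subgraph of G and let S = G − V(G'). If G is s-irreducible, then G' is s'-irreducible, where s'(v) = s(v) − d_S(v) for every v ∈ V(G') and d_S(v) is the number of neighbors of v in S. -/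
/-- If `G` is `s`-irreducible, then the subgraph `G'` of `G` induced by a vertex set `A`
is `s'`-irreducible, where `s'(v) = s(v) − d_S(v)` and `d_S(v)` is the number of
neighbors of `v` in `S = G − V(G')`, i.e. in the complement of `A`. -/
theorem irreducible_induce {V : Type*} [Fintype V] (G : SimpleGraph V) (s : V → ℕ)
    (A : Set V) (h : ¬ SReducibleZ G (fun v => (s v : ℤ))) :
    ¬ SReducibleZ (G.induce A)
        (fun v => (s v.val : ℤ) - ({u | u ∉ A ∧ G.Adj u v.val}.ncard : ℤ)) := by
  classical
  rintro ⟨H', hne, hred⟩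
  apply h
  let H : G.Subgraph :=
    { verts := {v | ∀ hv : v ∈ A, (⟨v, hv⟩ : A) ∈ H'.verts}
      Adj := fun u v => G.Adj u v ∧ (∀ hu : u ∈ A, (⟨u, hu⟩ : A) ∈ H'.verts) ∧
        (∀ hv : v ∈ A, (⟨v, hv⟩ : A) ∈ H'.verts) ∧
        ∀ (hu : u ∈ A) (hv : v ∈ A), H'.Adj ⟨u, hu⟩ ⟨v, hv⟩
      adj_sub := fun h => h.1
      edge_vert := fun h => h.2.1
      symm := ⟨fun u v h => ⟨h.1.symm, h.2.2.1, h.2.1, fun hu hv => (h.2.2.2 hv hu).symm⟩⟩ }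
  refine ⟨H, ?_, ?_⟩
  · intro hH
    apply hne
    have hv : ∀ v : V, v ∈ H.verts := by
      intro v
      rw [hH]
      trivial
    have ha : ∀ u v : V, G.Adj u v → H.Adj u v := by
      intro u v huv
      rw [hH]
      exact huv
    ext u v
    · exact ⟨fun _ => trivial, fun _ => hv u.1 u.2⟩
    · constructor
      · intro huv
        exact H'.adj_sub huv
      · intro huv
        exact (ha u.1 v.1 huv).2.2.2 u.2 v.2
  · rintro L hL ⟨φ, hφL, hφ⟩
    let N : V → Finset V := fun v => Finset.univ.filter (fun u => u ∉ A ∧ G.Adj u v)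
    obtain ⟨ψ, hψL, hψ⟩ := hred (fun v => L v.1 \ (N v.1).image φ) (by
      intro v
      have h1 : {u | u ∉ A ∧ G.Adj u v.val}.ncard = (N v.1).card := by
        rw [← Set.ncard_coe_finset]
        congr 1
        ext u
        simp [N]
      have h2 := Finset.le_card_sdiff ((N v.1).image φ) (L v.1)
      have h3 : ((N v.1).image φ).card ≤ (N v.1).card := Finset.card_image_le
      have h4 := hL v.1
      simp only [h1] at h4 ⊢
      omega) ⟨fun v => φ v.1, by
        intro v hv
        refine Finset.mem_sdiff.2 ⟨hφL v.1 (fun _ => hv), ?_⟩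
        intro hm
        obtain ⟨u, hu, he⟩ := Finset.mem_image.1 hm
        obtain ⟨huA, huv⟩ := (Finset.mem_filter.1 hu).2
        exact hφ (u := u) (v := v.1)
          ⟨huv, fun h => absurd h huA, fun _ => hv, fun h => absurd h huA⟩ he, by
        intro u v huv
        exact hφ (u := u.1) (v := v.1) ⟨H'.adj_sub huv, fun _ => H'.edge_vert huv,
          fun _ => H'.edge_vert huv.symm, fun _ _ => huv⟩⟩
    have key : ∀ u v : V, ∀ hv : v ∈ A, u ∉ A → G.Adj u v → φ u ≠ ψ ⟨v, hv⟩ := by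
      intro u v hv hu huv he
      refine (Finset.mem_sdiff.1 (hψL ⟨v, hv⟩)).2 (Finset.mem_image.2 ⟨u, ?_, he⟩)
      exact Finset.mem_filter.2 ⟨Finset.mem_univ _, hu, huv⟩
    refine ⟨fun v => if hv : v ∈ A then ψ ⟨v, hv⟩ else φ v, ?_, ?_⟩
    · intro v
      by_cases hv : v ∈ A
      · simp only [hv, dif_pos]
        exact (Finset.mem_sdiff.1 (hψL ⟨v, hv⟩)).1
      · simp only [hv, dif_neg, not_false_eq_true]
        exact hφL v (fun h => absurd h hv)
    · intro u v huv
      by_cases hu : u ∈ A <;> by_cases hv : v ∈ A <;>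
        simp only [hu, hv, dif_pos, dif_neg, not_false_eq_true]
      · exact hψ (u := ⟨u, hu⟩) (v := ⟨v, hv⟩) huv
      · exact (key v u hu hv huv.symm).symm
      · exact key u v hv hu huv
      · exact hφ ⟨huv, fun h => absurd h hu, fun h => absurd h hv, fun h => absurd h hu⟩
end

section
/- Let T be a proper subgraph of a finite simple graph G and let s_G : V(G) → ℕ. Suppose G' is an induced subgraph of G − V(T) and let S = G − V(G'). If G' is s'-reducible for the function s' defined by s'(v) = s_G(v) − d_S(v) for v ∈ V(G'), where d_S(v) is the number of neighbors of v in S, then there is no s_G-list assignment L for G such that G is T-critical with respect to L. -/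
/-- Let `T` be a proper subgraph of `G` and `s_G : V(G) → ℕ`.  If an induced subgraph
`G'` of `G − V(T)` (induced by a vertex set `A` disjoint from `V(T)`) is `s'`-reducible,
where `s'(v) = s_G(v) − d_S(v)` and `d_S(v)` counts the neighbors of `v` in
`S = G − V(G')`, then there is no `s_G`-list assignment `L` for which `G` is
`T`-critical with respect to `L`. -/
theorem no_critical_of_reducible_subgraph {V : Type*} [Fintype V] (G : SimpleGraph V)
    (T : G.Subgraph) (hT : T ≠ ⊤) (sG : V → ℕ) (A : Set V) (hA : A ⊆ (T.verts)ᶜ)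
    (hred : SReducibleZ (G.induce A)
      (fun v => (sG v.val : ℤ) - ({u | u ∉ A ∧ G.Adj u v.val}.ncard : ℤ))) :
    ¬ ∃ L : V → Finset ℕ, (∀ v, sG v ≤ (L v).card) ∧ TCritical G T L := by
  classical
  rintro ⟨L, hL, -, hcrit⟩
  obtain ⟨H, hH, hred⟩ := hred
  -- the proper subgraph of `G` obtained by replacing `G[A]` by `H`
  let G' : G.Subgraph :=
    { verts := {v | ∀ h : v ∈ A, (⟨v, h⟩ : A) ∈ H.verts}
      Adj := fun u v => G.Adj u v ∧ (∀ h : u ∈ A, (⟨u, h⟩ : A) ∈ H.verts) ∧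
        (∀ h : v ∈ A, (⟨v, h⟩ : A) ∈ H.verts) ∧
        ∀ (hu : u ∈ A) (hv : v ∈ A), H.Adj ⟨u, hu⟩ ⟨v, hv⟩
      adj_sub := fun h => h.1
      edge_vert := fun h => h.2.1
      symm := ⟨fun u v h => ⟨h.1.symm, h.2.2.1, h.2.1, fun hv hu => (h.2.2.2 hu hv).symm⟩⟩ }
  have hTA : ∀ v ∈ T.verts, v ∉ A := fun v hv hvA => hA hvA hv
  have hTG : T ≤ G' := by
    refine ⟨fun v hv h => absurd h (hTA v hv), fun u v huv => ?_⟩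
    have hu := hTA u (T.edge_vert huv)
    have hv := hTA v (T.edge_vert huv.symm)
    exact ⟨T.adj_sub huv, fun h => absurd h hu, fun h => absurd h hv, fun h => absurd h hu⟩
  have hne : G' ≠ ⊤ := by
    intro h
    apply hH
    apply SimpleGraph.Subgraph.ext
    · ext ⟨v, hv⟩
      have : v ∈ G'.verts := by rw [h]; trivial
      simpa using this hv
    · funext ⟨u, hu⟩ ⟨v, hv⟩
      apply propext
      refine ⟨fun h => H.adj_sub h, fun huv => ?_⟩
      have huv' : G.Adj u v := huv
      have : G'.Adj u v := by rw [h]; exact huv'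
      exact this.2.2.2 hu hv
  obtain ⟨ψ, -, -, ⟨φ, hφL, hφ, hφψ⟩, hno⟩ := hcrit G' hTG hne
  let N : V → Finset V := fun v => Finset.univ.filter fun u => u ∉ A ∧ G.Adj u v
  have hN : ∀ v, ({u | u ∉ A ∧ G.Adj u v} : Set V).ncard = (N v).card := by
    intro v
    rw [← Set.ncard_coe_finset]
    congr 1
    ext u
    simp [N]
  obtain ⟨χ, hχL, hχ⟩ := hred (fun v => L v.val \ (N v.val).image φ) (by
    intro v
    have h1 := Finset.le_card_sdiff ((N v.val).image φ) (L v.val)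
    have h2 : ((N v.val).image φ).card ≤ (N v.val).card := Finset.card_image_le
    have h3 := hL v.val
    have h4 := hN v.val
    simp only [h4]
    omega) ⟨fun v => φ v.val, by
      rintro ⟨v, hvA⟩ hv
      have hv' : v ∈ G'.verts := fun _ => hv
      simp only [Finset.mem_sdiff, Finset.mem_image, not_exists, not_and]
      refine ⟨hφL v hv', fun u hu => ?_⟩
      simp only [N, Finset.mem_filter, Finset.mem_univ, true_and] at hu
      exact hφ ⟨hu.2, fun h => absurd h hu.1, hv', fun h => absurd h hu.1⟩, by
      rintro ⟨u, hu⟩ ⟨v, hv⟩ huv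
      exact hφ ⟨H.adj_sub huv, fun _ => H.edge_vert huv, fun _ => H.edge_vert huv.symm,
        fun _ _ => huv⟩⟩
  simp only [Finset.mem_sdiff, Finset.mem_image, not_exists, not_and] at hχL
  have key : ∀ (u v : V) (_ : u ∉ A) (hv : v ∈ A), G.Adj u v → φ u ≠ χ ⟨v, hv⟩ := by
    intro u v hu hv huv
    exact (hχL ⟨v, hv⟩).2 u (by simp [N, hu, huv])
  refine hno ⟨fun v => if h : v ∈ A then χ ⟨v, h⟩ else φ v, ?_, ?_, ?_⟩
  · intro v
    by_cases h : v ∈ A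
    · simpa [h] using (hχL ⟨v, h⟩).1
    · simpa [h] using hφL v (fun h' => absurd h' h)
  · intro u v huv
    by_cases hu : u ∈ A <;> by_cases hv : v ∈ A <;> simp only [hu, hv, dite_true, dite_false]
    · exact hχ (show G.Adj u v from huv)
    · exact (key v u hv hu huv.symm).symm
    · exact key u v hu hv huv
    · exact hφ ⟨huv, fun h => absurd h hu, fun h => absurd h hv, fun h => absurd h hu⟩
  · intro v hv
    simpa [hTA v hv] using hφψ v hv
end

section
/- Let W be the 5-wheel: the graph with vertices u, v₁, v₂, v₃, v₄, v₅, where v₁v₂v₃v₄v₅ forms a 5-cycle and u is adjacent to all of v₁,…,v₅. Let s(u) = 5, s(v₁) = s(v₂) = 3, and s(v₃) = s(v₄) = s(v₅) = 2. Then W is s-colorable. -/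
/-- The 5-wheel: vertex `0` is the central vertex `u`, and vertices `1,…,5` form the rim
5-cycle `v₁v₂v₃v₄v₅` (edges `{1,2}, {2,3}, {3,4}, {4,5}, {5,1}`), with `0` adjacent to
all of `1,…,5`. -/
def Wheel5 : SimpleGraph (Fin 6) :=
  SimpleGraph.fromRel (fun a b => a = 0 ∨ (1 ≤ a.val ∧ b.val = a.val % 5 + 1))

/-- The list sizes: `s(u) = 5`, `s(v₁) = s(v₂) = 3`, `s(v₃) = s(v₄) = s(v₅) = 2`. -/
def sW : Fin 6 → ℕ := ![5, 3, 3, 2, 2, 2]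

theorem exists_ne_two {A : Finset ℕ} (h : 2 ≤ A.card) (x : ℕ) : ∃ y ∈ A, y ≠ x :=
  Finset.exists_mem_ne (by omega) x

theorem exists_erase {A : Finset ℕ} {n : ℕ} (h : n + 1 ≤ A.card) (x : ℕ) :
    n ≤ (A.erase x).card := by
  have := Finset.pred_card_le_card_erase (s := A) (a := x)
  omega

/-- A proper list coloring of a 5-cycle. -/
def Cyc (A B C D E : Finset ℕ) : Prop :=
  ∃ a ∈ A, ∃ b ∈ B, ∃ c ∈ C, ∃ d ∈ D, ∃ e ∈ E, a ≠ b ∧ b ≠ c ∧ c ≠ d ∧ d ≠ e ∧ e ≠ a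

theorem Cyc.rot {A B C D E : Finset ℕ} : Cyc A B C D E → Cyc B C D E A := by
  rintro ⟨a, ha, b, hb, c, hc, d, hd, e, he, h1, h2, h3, h4, h5⟩
  exact ⟨b, hb, c, hc, d, hd, e, he, a, ha, h2, h3, h4, h5, h1⟩

theorem Cyc.refl {A B C D E : Finset ℕ} : Cyc A B C D E → Cyc B A E D C := by
  rintro ⟨a, ha, b, hb, c, hc, d, hd, e, he, h1, h2, h3, h4, h5⟩
  exact ⟨b, hb, a, ha, e, he, d, hd, c, hc, h1.symm, h5.symm, h4.symm, h3.symm, h2.symm⟩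

theorem cyc_of_mem {A B C D E : Finset ℕ} (hB : 2 ≤ B.card) (hC : 2 ≤ C.card)
    (hD : 2 ≤ D.card) (hE : 2 ≤ E.card) {x : ℕ} (hx : x ∈ A) (hxB : x ∉ B) :
    Cyc A B C D E := by
  obtain ⟨e, he, h1⟩ := exists_ne_two hE x
  obtain ⟨d, hd, h2⟩ := exists_ne_two hD e
  obtain ⟨c, hc, h3⟩ := exists_ne_two hC d
  obtain ⟨b, hb, h4⟩ := exists_ne_two hB c
  exact ⟨x, hx, b, hb, c, hc, d, hd, e, he, fun h => hxB (h ▸ hb), h4, h3, h2, h1⟩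

theorem cyc_of_ne {A B C D E : Finset ℕ} (hA : 2 ≤ A.card) (hB : 2 ≤ B.card) (hC : 2 ≤ C.card)
    (hD : 2 ≤ D.card) (hE : 2 ≤ E.card) (h : A ≠ B) : Cyc A B C D E := by
  by_cases h1 : A ⊆ B
  · have h2 : ¬ B ⊆ A := fun h2 => h (h1.antisymm h2)
    obtain ⟨x, hx, hx'⟩ := Finset.not_subset.1 h2
    exact (cyc_of_mem hA hE hD hC hx hx').refl
  · obtain ⟨x, hx, hx'⟩ := Finset.not_subset.1 h1
    exact cyc_of_mem hB hC hD hE hx hx'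

theorem cyc_or_eq {A B C D E : Finset ℕ} (hA : 2 ≤ A.card) (hB : 2 ≤ B.card) (hC : 2 ≤ C.card)
    (hD : 2 ≤ D.card) (hE : 2 ≤ E.card) :
    Cyc A B C D E ∨ (A = B ∧ B = C ∧ C = D ∧ D = E) := by
  by_cases h1 : A = B
  swap
  · exact .inl (cyc_of_ne hA hB hC hD hE h1)
  by_cases h2 : B = C
  swap
  · exact .inl (cyc_of_ne hB hC hD hE hA h2).rot.rot.rot.rot
  by_cases h3 : C = D
  swap
  · exact .inl (cyc_of_ne hC hD hE hA hB h3).rot.rot.rot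
  by_cases h4 : D = E
  swap
  · exact .inl (cyc_of_ne hD hE hA hB hC h4).rot.rot
  exact .inr ⟨h1, h2, h3, h4⟩

/-- If `c` lies in the list of `v₃` only, and the lists of `v₃`, `v₄` are disjoint. -/
theorem cyc_side {c : ℕ} {A B C D E : Finset ℕ} (hA : 3 ≤ A.card) (hB : 3 ≤ B.card)
    (hC : 2 ≤ C.card) (hD : 2 ≤ D.card) (hE : 2 ≤ E.card)
    (hcD : c ∉ D) (hcE : c ∉ E) (hdis : ∀ x ∈ C, x ∉ D) :
    Cyc (A.erase c) (B.erase c) (C.erase c) (D.erase c) (E.erase c) := by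
  rw [Finset.erase_eq_of_notMem hcD, Finset.erase_eq_of_notMem hcE]
  obtain ⟨d, hd, hdc⟩ := exists_ne_two hC c
  obtain ⟨b, hb, h1⟩ := exists_ne_two (exists_erase hB c) d
  obtain ⟨a, ha, h2⟩ := exists_ne_two (exists_erase hA c) b
  obtain ⟨e, he, h3⟩ := exists_ne_two hE a
  obtain ⟨f, hf, h4⟩ := exists_ne_two hD e
  exact ⟨a, ha, b, hb, d, Finset.mem_erase.2 ⟨hdc, hd⟩, f, hf, e, he, h2, h1,
    fun h => hdis d hd (h ▸ hf), h4, h3⟩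

theorem wheel_core {U A B C D E : Finset ℕ} (hU : U.card = 5) (hA : 3 ≤ A.card)
    (hB : 3 ≤ B.card) (hC : C.card = 2) (hD : D.card = 2) (hE : E.card = 2) :
    ∃ c ∈ U, Cyc (A.erase c) (B.erase c) (C.erase c) (D.erase c) (E.erase c) := by
  by_cases hsub : U ⊆ C ∪ D ∪ E
  · by_cases h34 : ∀ x ∈ C, x ∉ D
    · have : ¬ U ⊆ D ∪ E := fun h => by
        have := Finset.card_le_card h
        have := Finset.card_union_le D E
        omega
      obtain ⟨c, hcU, hc⟩ := Finset.not_subset.1 this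
      rw [Finset.mem_union, not_or] at hc
      exact ⟨c, hcU, cyc_side hA hB hC.ge hD.ge hE.ge hc.1 hc.2 h34⟩
    · push Not at h34
      obtain ⟨x, hxC, hxD⟩ := h34
      have h54 : ∀ y ∈ E, y ∉ D := fun y hyE hyD => by
        have h : U ⊆ D ∪ (C.erase x ∪ E.erase y) := fun z hz => by
          have := hsub hz
          simp only [Finset.mem_union, Finset.mem_erase] at this ⊢
          by_cases z = x <;> by_cases z = y <;> grind
        have h0 := Finset.card_le_card h
        have h1 := Finset.card_union_le D (C.erase x ∪ E.erase y)
        have h2 := Finset.card_union_le (C.erase x) (E.erase y)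
        rw [Finset.card_erase_of_mem hxC, Finset.card_erase_of_mem hyE] at h2
        omega
      have : ¬ U ⊆ D ∪ C := fun h => by
        have := Finset.card_le_card h
        have := Finset.card_union_le D C
        omega
      obtain ⟨c, hcU, hc⟩ := Finset.not_subset.1 this
      rw [Finset.mem_union, not_or] at hc
      exact ⟨c, hcU, (cyc_side hB hA hE.ge hD.ge hC.ge hc.1 hc.2 h54).refl⟩
  · obtain ⟨c, hcU, hc⟩ := Finset.not_subset.1 hsub
    simp only [Finset.mem_union, not_or] at hc
    obtain ⟨⟨hcC, hcD⟩, hcE⟩ := hc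
    rcases cyc_or_eq (exists_erase hA c) (exists_erase hB c) hC.ge hD.ge hE.ge with h | h
    · refine ⟨c, hcU, ?_⟩
      rwa [Finset.erase_eq_of_notMem hcC, Finset.erase_eq_of_notMem hcD,
        Finset.erase_eq_of_notMem hcE]
    · obtain ⟨h1, h2, rfl, rfl⟩ := h
      have hcA : c ∈ A := by
        by_contra hn
        rw [Finset.erase_eq_of_notMem hn] at h1
        rw [h1, h2] at hA
        omega
      have : ¬ U ⊆ insert c C := fun h => by
        have := Finset.card_le_card h
        have := Finset.card_insert_le c C
        omega
      obtain ⟨c', hc'U, hc'⟩ := Finset.not_subset.1 this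
      rw [Finset.mem_insert, not_or] at hc'
      obtain ⟨a, b, hab, rfl⟩ := Finset.card_eq_two.1 hC
      have haB : a ∈ B.erase c := by rw [h2]; simp
      have haB' := Finset.mem_of_mem_erase haB
      refine ⟨c', hc'U, c, ?_, a, ?_, b, ?_, a, ?_, b, ?_, ?_⟩ <;> grind

/-- The 5-wheel `W` is `s`-colorable for the list sizes above: for every list
assignment `L` with `|L(v)| ≥ s(v)` for all `v`, `W` has a proper `L`-coloring. -/
theorem wheel5_sColorable :
    ∀ L : Fin 6 → Finset ℕ, (∀ v, sW v ≤ (L v).card) →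
      ∃ φ : Fin 6 → ℕ, (∀ v, φ v ∈ L v) ∧ ∀ ⦃u v⦄, Wheel5.Adj u v → φ u ≠ φ v := by
  intro L hL
  obtain ⟨U, hUs, hU⟩ := Finset.exists_subset_card_eq (show 5 ≤ (L 0).card from hL 0)
  obtain ⟨C, hCs, hC⟩ := Finset.exists_subset_card_eq (show 2 ≤ (L 3).card from hL 3)
  obtain ⟨D, hDs, hD⟩ := Finset.exists_subset_card_eq (show 2 ≤ (L 4).card from hL 4)
  obtain ⟨E, hEs, hE⟩ := Finset.exists_subset_card_eq (show 2 ≤ (L 5).card from hL 5)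
  obtain ⟨u, hu, a, ha, b, hb, c, hc, d, hd, e, he, h1, h2, h3, h4, h5⟩ :=
    wheel_core hU (show 3 ≤ (L 1).card from hL 1) (show 3 ≤ (L 2).card from hL 2) hC hD hE
  rw [Finset.mem_erase] at ha hb hc hd he
  refine ⟨![u, a, b, c, d, e], ?_, ?_⟩
  · intro v
    fin_cases v
    · exact hUs hu
    · exact ha.2
    · exact hb.2
    · exact hCs hc.2
    · exact hDs hd.2
    · exact hEs he.2
  · intro x y hxy
    rw [Wheel5, SimpleGraph.fromRel_adj] at hxy
    obtain ⟨hne, hxy⟩ := hxy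
    have := ha.1
    have := hb.1
    have := hc.1
    have := hd.1
    have := he.1
    fin_cases x <;> fin_cases y <;> simp at hne hxy ⊢ <;> first | assumption | (apply Ne.symm; assumption)
end

section
/- Let K be the graph with vertex set {u, v, w, x, y} and edge set {uv, uw, ux, uy, vw, wx, xy}, and let s(u) = 4 and s(v) = s(w) = s(x) = s(y) = 2. Then K is s-reducible; in fact, the proper subgraph H = K − wx witnesses reducibility: for every s-list assignment L, if K − wx is L-colorable then K is L-colorable. -/
/-- The graph `K` with vertices `u = 0`, `v = 1`, `w = 2`, `x = 3`, `y = 4` and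
edges `uv, uw, ux, uy, vw, wx, xy`. -/
def Kgraph : SimpleGraph (Fin 5) :=
  SimpleGraph.fromRel (fun a b =>
    (a = 0 ∧ b = 1) ∨ (a = 0 ∧ b = 2) ∨ (a = 0 ∧ b = 3) ∨ (a = 0 ∧ b = 4) ∨
    (a = 1 ∧ b = 2) ∨ (a = 2 ∧ b = 3) ∨ (a = 3 ∧ b = 4))

/-- The list sizes: `s(u) = 4` and `s(v) = s(w) = s(x) = s(y) = 2`. -/
def sK : Fin 5 → ℕ := ![4, 2, 2, 2, 2]

/-- `PathOK e ...`: after giving `u` the color `e`, the path `v w x y` with two-element lists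
can be colored. -/
def PathOK (e : ℕ) (V W X Y : ℕ → Prop) : Prop :=
  ∃ v w x y, V v ∧ W w ∧ X x ∧ Y y ∧ v ≠ e ∧ w ≠ e ∧ x ≠ e ∧ y ≠ e ∧ v ≠ w ∧ w ≠ x ∧ x ≠ y

theorem path_bad (e p p' a b d q q' : ℕ) (hp : p ≠ p') (hb : a ≠ b) (hd : a ≠ d) (hq : q ≠ q')
    (hpa : p ≠ a) (hqa : q ≠ a)
    (h : ¬ PathOK e (fun z => z = p ∨ z = p') (fun z => z = a ∨ z = b)
      (fun z => z = a ∨ z = d) (fun z => z = q ∨ z = q')) :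
    (p = b ∧ p' = a ∧ (e = a ∨ e = b)) ∨ (q = d ∧ q' = a ∧ (e = a ∨ e = d)) ∨
    (b = d ∧ (e = a ∨ e = b)) ∨
    ((e = p ∨ e = p') ∧ (e = a ∨ e = d) ∧ e ≠ a ∧ e ≠ b ∧
      (p = b ∨ p = a ∨ p' = a ∨ p' = b)∧ b ≠ d ) ∨
    ((e = q ∨ e = q') ∧ (e = a ∨ e = b) ∧ e ≠ a ∧ e ≠ d ∧
      (q = d ∨ q = a ∨ q' = a ∨ q' = d)∧ b ≠ d) ∨
    ((e = p ∨ e = p') ∧ (e = q ∨ e = q') ∧ e ≠ a ∧ e ≠ b ∧ e ≠ d ∧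
      (p = b ∨ p' = a ∨ p' = b) ∧ (q = d ∨ q' = a ∨ q' = d)) := by
  have key : ∀ v w x y, (v = p ∨ v = p') → (w = a ∨ w = b) → (x = a ∨ x = d) →
      (y = q ∨ y = q') →
      v = e ∨ w = e ∨ x = e ∨ y = e ∨ v = w ∨ w = x ∨ x = y := by
    intro v w x y h1 h2 h3 h4
    by_contra hc
    push Not at hc
    exact h ⟨v, w, x, y, h1, h2, h3, h4, hc⟩
  have k1 := key p a d q (by simp) (by simp) (by simp) (by simp)
  have k2 := key p a d q' (by simp) (by simp) (by simp) (by simp)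
  have k3 := key p' a d q (by simp) (by simp) (by simp) (by simp)
  have k4 := key p' a d q' (by simp) (by simp) (by simp) (by simp)
  have k5 := key p b a q (by simp) (by simp) (by simp) (by simp)
  have k6 := key p b a q' (by simp) (by simp) (by simp) (by simp)
  have k7 := key p' b a q (by simp) (by simp) (by simp) (by simp)
  have k8 := key p' b a q' (by simp) (by simp) (by simp) (by simp)
  have k9 := key p b d q (by simp) (by simp) (by simp) (by simp)
  have k10 := key p b d q' (by simp) (by simp) (by simp) (by simp)
  have k11 := key p' b d q (by simp) (by simp) (by simp) (by simp)
  have k12 := key p' b d q' (by simp) (by simp) (by simp) (by simp)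
  clear key h
  by_cases e1 : e = a <;> by_cases e2 : e = b <;> by_cases e3 : e = d <;> by_cases e4 : e = p <;>
    by_cases e5 : e = p' <;> by_cases e6 : e = q <;> by_cases e7 : e = q' <;> grind (splits := 30)

theorem core (c e1 e2 e3 p p' a b d q q' : ℕ) (hp : p ≠ p') (hb : a ≠ b) (hd : a ≠ d) (hq : q ≠ q')
    (hpa : p ≠ a) (hqa : q ≠ a) (hca : c ≠ a) (hcp : c ≠ p) (hcq : c ≠ q)
    (h1 : e1 ≠ c) (h2 : e2 ≠ c) (h3 : e3 ≠ c) (h12 : e1 ≠ e2) (h13 : e1 ≠ e3) (h23 : e2 ≠ e3) :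
    ∃ e, (e = c ∨ e = e1 ∨ e = e2 ∨ e = e3) ∧
      PathOK e (fun z => z = p ∨ z = p') (fun z => z = a ∨ z = b)
      (fun z => z = a ∨ z = d) (fun z => z = q ∨ z = q') := by
  by_contra hc
  push Not at hc
  have k0 := path_bad c p p' a b d q q' hp hb hd hq hpa hqa (hc c (by simp))
  have k1 := path_bad e1 p p' a b d q q' hp hb hd hq hpa hqa (hc e1 (by simp))
  have k2 := path_bad e2 p p' a b d q q' hp hb hd hq hpa hqa (hc e2 (by simp))
  have k3 := path_bad e3 p p' a b d q q' hp hb hd hq hpa hqa (hc e3 (by simp))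
  clear hc
  rcases k0 with k0 | k0 | k0 | k0 | k0 | k0 <;> grind (splits := 40)

theorem second {S : Finset ℕ} (h : 2 ≤ S.card) (a : ℕ) : ∃ b ∈ S, a ≠ b := by
  obtain ⟨b, hb, h⟩ := Finset.exists_mem_ne (s := S) (by omega) a
  exact ⟨b, hb, h.symm⟩

/-- `K` is `s`-reducible, witnessed by the proper subgraph `H = K − wx` (the subgraph
obtained by deleting the edge `wx`): for every `s`-list assignment `L`, if `K − wx` is
`L`-colorable then `K` is `L`-colorable. -/
theorem Kgraph_sReducible :
    (⊤ : Kgraph.Subgraph).deleteEdges {s((2 : Fin 5), (3 : Fin 5))} ≠ ⊤ ∧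
    ∀ L : Fin 5 → Finset ℕ, (∀ z, sK z ≤ (L z).card) →
      (∃ φ : Fin 5 → ℕ,
        (∀ v ∈ ((⊤ : Kgraph.Subgraph).deleteEdges {s((2 : Fin 5), (3 : Fin 5))}).verts,
          φ v ∈ L v) ∧
        ∀ ⦃u v⦄, ((⊤ : Kgraph.Subgraph).deleteEdges {s((2 : Fin 5), (3 : Fin 5))}).Adj u v →
          φ u ≠ φ v) →
      ∃ φ : Fin 5 → ℕ, (∀ v, φ v ∈ L v) ∧ ∀ ⦃u v⦄, Kgraph.Adj u v → φ u ≠ φ v := by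
  constructor
  · intro h
    have h2 : (⊤ : Kgraph.Subgraph).Adj 2 3 := by
      rw [SimpleGraph.Subgraph.top_adj]
      simp [Kgraph]
    rw [← h] at h2
    simp at h2
  rintro L hL ⟨φ, hφ, hadj⟩
  have final : ∀ u v w x y : ℕ, u ∈ L 0 → v ∈ L 1 → w ∈ L 2 → x ∈ L 3 → y ∈ L 4 →
      v ≠ u → w ≠ u → x ≠ u → y ≠ u → v ≠ w → w ≠ x → x ≠ y →
      ∃ φ : Fin 5 → ℕ, (∀ v, φ v ∈ L v) ∧ ∀ ⦃u v⦄, Kgraph.Adj u v → φ u ≠ φ v := by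
    intro u v w x y hu hv hw hx hy h1 h2 h3 h4 h5 h6 h7
    refine ⟨![u, v, w, x, y], ?_, ?_⟩
    · intro z
      fin_cases z <;> assumption
    · intro s t hst
      fin_cases s <;> fin_cases t <;> simp [Kgraph] at hst ⊢ <;> first | assumption | (apply Ne.symm; assumption)
  have m : ∀ z, φ z ∈ L z := fun z => hφ z (by simp)
  have n1 : φ 0 ≠ φ 1 := hadj (by
    rw [SimpleGraph.Subgraph.deleteEdges_adj, SimpleGraph.Subgraph.top_adj]
    simp [Kgraph])
  have n2 : φ 0 ≠ φ 2 := hadj (by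
    rw [SimpleGraph.Subgraph.deleteEdges_adj, SimpleGraph.Subgraph.top_adj]
    simp [Kgraph])
  have n3 : φ 0 ≠ φ 3 := hadj (by
    rw [SimpleGraph.Subgraph.deleteEdges_adj, SimpleGraph.Subgraph.top_adj]
    simp [Kgraph])
  have n4 : φ 0 ≠ φ 4 := hadj (by
    rw [SimpleGraph.Subgraph.deleteEdges_adj, SimpleGraph.Subgraph.top_adj]
    simp [Kgraph])
  have n5 : φ 1 ≠ φ 2 := hadj (by
    rw [SimpleGraph.Subgraph.deleteEdges_adj, SimpleGraph.Subgraph.top_adj]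
    simp [Kgraph])
  have n6 : φ 3 ≠ φ 4 := hadj (by
    rw [SimpleGraph.Subgraph.deleteEdges_adj, SimpleGraph.Subgraph.top_adj]
    simp [Kgraph])
  by_cases hwx : φ 2 = φ 3
  swap
  · exact final _ _ _ _ _ (m 0) (m 1) (m 2) (m 3) (m 4) n1.symm n2.symm n3.symm n4.symm n5 hwx n6
  obtain ⟨p', hp', hp⟩ := second (hL 1) (φ 1)
  obtain ⟨b, hb', hb⟩ := second (hL 2) (φ 2)
  obtain ⟨d, hd', hd⟩ := second (hL 3) (φ 3)
  obtain ⟨q', hq', hq⟩ := second (hL 4) (φ 4)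
  have hc : 2 < ((L 0).erase (φ 0)).card := by
    rw [Finset.card_erase_of_mem (m 0)]
    have : 4 ≤ (L 0).card := hL 0
    omega
  obtain ⟨e1, e2, e3, he1, he2, he3, h12, h13, h23⟩ := Finset.two_lt_card_iff.1 hc
  rw [Finset.mem_erase] at he1 he2 he3
  obtain ⟨e, he, v, w, x, y, hv, hw, hx, hy, r⟩ := core (φ 0) e1 e2 e3 (φ 1) p' (φ 2) b d (φ 4) q'
    hp hb (hwx ▸ hd) hq n5 (hwx ▸ n6.symm) n2 n1 n4 he1.1 he2.1 he3.1 h12 h13 h23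
  have M0 := m 0
  have M1 := m 1
  have M2 := m 2
  have M3 := m 3
  have M4 := m 4
  obtain ⟨r1, r2, r3, r4, r5, r6, r7⟩ := r
  refine final e v w x y ?_ ?_ ?_ ?_ ?_ r1 r2 r3 r4 r5 r6 r7
  · rcases he with rfl | rfl | rfl | rfl
    exacts [M0, he1.2, he2.2, he3.2]
  · rcases hv with rfl | rfl <;> assumption
  · rcases hw with rfl | rfl <;> assumption
  · rcases hx with rfl | rfl
    · rw [hwx]; assumption
    · assumption
  · rcases hy with rfl | rfl <;> assumption
end

section
/- Let K be the graph with vertex set {u, v, w, x, y} and edge set {uv, uw, ux, uy, vw, wx, xy}, and let s(u) = 4 and s(v) = s(w) = s(x) = s(y) = 2. Then K is not s-colorable; that is, there exists a list assignment L with |L(z)| ≥ s(z) for every vertex z such that K has no L-coloring. -/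
/-- `K` is not `s`-colorable: there exists a list assignment `L` with `|L(z)| ≥ s(z)`
for every vertex `z` such that `K` has no proper `L`-coloring. -/
theorem Kgraph_not_sColorable :
    ∃ L : Fin 5 → Finset ℕ, (∀ z, sK z ≤ (L z).card) ∧
      ¬ ∃ φ : Fin 5 → ℕ, (∀ v, φ v ∈ L v) ∧ ∀ ⦃u v⦄, Kgraph.Adj u v → φ u ≠ φ v := by
  -- L(u) = {1,2,3,4}, L(v) = L(w) = {1,2}, L(x) = L(y) = {3,4}
  refine ⟨![{1, 2, 3, 4}, {1, 2}, {1, 2}, {3, 4}, {3, 4}], by decide, ?_⟩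
  rintro ⟨φ, hL, hφ⟩
  have h01 : φ 0 ≠ φ 1 := hφ (by simp [Kgraph])
  have h02 : φ 0 ≠ φ 2 := hφ (by simp [Kgraph])
  have h03 : φ 0 ≠ φ 3 := hφ (by simp [Kgraph])
  have h04 : φ 0 ≠ φ 4 := hφ (by simp [Kgraph])
  have h12 : φ 1 ≠ φ 2 := hφ (by simp [Kgraph])
  have h34 : φ 3 ≠ φ 4 := hφ (by simp [Kgraph])
  have l0 : φ 0 = 1 ∨ φ 0 = 2 ∨ φ 0 = 3 ∨ φ 0 = 4 := by simpa using hL 0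
  have l1 : φ 1 = 1 ∨ φ 1 = 2 := by simpa using hL 1
  have l2 : φ 2 = 1 ∨ φ 2 = 2 := by simpa using hL 2
  have l3 : φ 3 = 3 ∨ φ 3 = 4 := by simpa using hL 3
  have l4 : φ 4 = 3 ∨ φ 4 = 4 := by simpa using hL 4
  omega
end

section
/- Let K be a finite simple graph and s : V(K) → ℕ. Let D be an orientation of K, i.e., a relation on V(K) such that for all vertices a, b, exactly one of D(a,b), D(b,a) holds when a and b are adjacent in K and neither holds otherwise. Suppose s(v) > deg⁺_D(v) for every v ∈ V(K), where deg⁺_D(v) is the number of vertices u with D(v,u). If the number of spanning Eulerian subdigraphs of D with an even number of arcs differs from the number of spanning Eulerian subdigraphs of D with an odd number of arcs, then K is s-colorable. -/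
/-- `A` is a spanning Eulerian subdigraph of the orientation `D`: a set of arcs of `D`
such that at every vertex the number of arcs of `A` leaving it equals the number of
arcs of `A` entering it (the empty arc set is allowed). -/
def IsSpanningEulerian {V : Type*} [Fintype V] [DecidableEq V] (D : V → V → Prop)
    (A : Finset (V × V)) : Prop :=
  (∀ p ∈ A, D p.1 p.2) ∧
    ∀ v : V, (A.filter (fun p => p.1 = v)).card = (A.filter (fun p => p.2 = v)).card

/-- The Alon–Tarsi theorem (in the form of list sizes `s`): if `D` is an orientation of
`K` with `s(v) > deg⁺(v)` for every vertex `v`, and the numbers of even and odd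
spanning Eulerian subdigraphs of `D` differ, then `K` is `s`-colorable. -/
theorem alon_tarsi {V : Type*} [Fintype V] [DecidableEq V] (K : SimpleGraph V)
    (s : V → ℕ) (D : V → V → Prop)
    (horient : ∀ a b : V, (K.Adj a b → (D a b ↔ ¬ D b a)) ∧ (¬ K.Adj a b → ¬ D a b))
    (hdeg : ∀ v : V, {u : V | D v u}.ncard < s v)
    (hAT : {A : Finset (V × V) | IsSpanningEulerian D A ∧ Even A.card}.ncard ≠
           {A : Finset (V × V) | IsSpanningEulerian D A ∧ ¬ Even A.card}.ncard) :
    ∀ L : V → Finset ℕ, (∀ v, s v ≤ (L v).card) →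
      ∃ φ : V → ℕ, (∀ v, φ v ∈ L v) ∧ ∀ ⦃u v⦄, K.Adj u v → φ u ≠ φ v := by
  classical
  intro L hL
  set E : Finset (V × V) := Finset.univ.filter (fun p => D p.1 p.2) with hE
  set f : MvPolynomial V ℤ := ∏ p ∈ E, (MvPolynomial.X p.1 - MvPolynomial.X p.2) with hf
  set t : V →₀ ℕ := ∑ p ∈ E, Finsupp.single p.1 1 with ht
  have sum_apply : ∀ (A : Finset (V × V)) (g : V × V → V) (v : V),
      (∑ p ∈ A, Finsupp.single (g p) 1 : V →₀ ℕ) v = (A.filter (fun p => g p = v)).card := by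
    intro A g v
    rw [Finsupp.finsetSum_apply, Finset.card_filter]
    exact Finset.sum_congr rfl fun p _ => Finsupp.single_apply
  have mono : ∀ (A : Finset (V × V)) (g : V × V → V),
      (∏ p ∈ A, (MvPolynomial.X (g p) : MvPolynomial V ℤ)) =
        MvPolynomial.monomial (∑ p ∈ A, Finsupp.single (g p) 1) 1 := by
    intro A g
    rw [MvPolynomial.monomial_sum_one]
    rfl
  have hcoeff : f.coeff t = ∑ A ∈ E.powerset,
      if IsSpanningEulerian D A then (-1 : ℤ) ^ A.card else 0 := by
    have h1 : f = ∑ A ∈ E.powerset, MvPolynomial.C ((-1 : ℤ) ^ A.card) *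
        MvPolynomial.monomial (∑ p ∈ A, Finsupp.single p.2 1 +
          ∑ p ∈ E \ A, Finsupp.single p.1 1) 1 := by
      rw [hf]
      have : ∀ p ∈ E, (MvPolynomial.X p.1 - MvPolynomial.X p.2 : MvPolynomial V ℤ) =
          (-MvPolynomial.X p.2) + MvPolynomial.X p.1 := fun p _ => by ring
      rw [Finset.prod_congr rfl this, Finset.prod_add]
      refine Finset.sum_congr rfl fun A _ => ?_
      rw [Finset.prod_neg, mono, mono, mul_assoc, MvPolynomial.monomial_mul]
      simp
    rw [h1, MvPolynomial.coeff_sum]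
    refine Finset.sum_congr rfl fun A hA => ?_
    rw [Finset.mem_powerset] at hA
    rw [MvPolynomial.coeff_C_mul, MvPolynomial.coeff_monomial, mul_ite, mul_one, mul_zero]
    refine if_congr ?_ rfl rfl
    rw [ht, ← Finset.sum_sdiff hA, add_comm, add_right_inj]
    constructor
    · intro h
      refine ⟨fun p hp => by simpa [hE] using hA hp, fun v => ?_⟩
      rw [← sum_apply A (fun p => p.1) v, ← sum_apply A (fun p => p.2) v, h]
    · intro h
      ext v
      rw [sum_apply A (fun p => p.1) v, sum_apply A (fun p => p.2) v, h.2 v]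
  have hne : f.coeff t ≠ 0 := by
    intro h0
    apply hAT
    have e1 : {A : Finset (V × V) | IsSpanningEulerian D A ∧ Even A.card} =
        ↑((E.powerset.filter (fun A => IsSpanningEulerian D A)).filter (fun A => Even A.card)) := by
      ext A
      simp only [Set.mem_ofPred_eq, Finset.coe_filter, Finset.mem_filter, Finset.mem_powerset]
      exact ⟨fun h => ⟨⟨fun p hp => by simpa [hE] using h.1.1 p hp, h.1⟩, h.2⟩,
        fun h => ⟨h.1.2, h.2⟩⟩
    have e2 : {A : Finset (V × V) | IsSpanningEulerian D A ∧ ¬ Even A.card} =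
        ↑((E.powerset.filter (fun A => IsSpanningEulerian D A)).filter (fun A => ¬ Even A.card)) := by
      ext A
      simp only [Set.mem_ofPred_eq, Finset.coe_filter, Finset.mem_filter, Finset.mem_powerset]
      exact ⟨fun h => ⟨⟨fun p hp => by simpa [hE] using h.1.1 p hp, h.1⟩, h.2⟩,
        fun h => ⟨h.1.2, h.2⟩⟩
    rw [e1, e2, Set.ncard_coe_finset, Set.ncard_coe_finset]
    rw [hcoeff, ← Finset.sum_filter,
      ← Finset.sum_filter_add_sum_filter_not _ (fun A : Finset (V × V) => Even A.card)] at h0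
    rw [Finset.sum_congr rfl (g := fun _ => (1 : ℤ))
        (fun A hA => (Finset.mem_filter.1 hA).2.neg_one_pow),
      Finset.sum_congr rfl (g := fun _ => (-1 : ℤ))
        (fun A hA => (Nat.not_even_iff_odd.1 (Finset.mem_filter.1 hA).2).neg_one_pow)] at h0
    simp only [Finset.sum_const, nsmul_eq_mul, mul_one, mul_neg] at h0
    have h2 := Int.ofNat.inj (add_neg_eq_zero.1 h0)
    convert h2 using 2
  have hdegf : f.totalDegree = t.degree := by
    have hh : f.IsHomogeneous (∑ p ∈ E, 1) :=
      MvPolynomial.IsHomogeneous.prod _ _ _ fun p _ =>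
        (MvPolynomial.isHomogeneous_X ℤ p.1).sub (MvPolynomial.isHomogeneous_X ℤ p.2)
    rw [hh.totalDegree (fun h => hne (by rw [h]; simp)), ht, map_sum]
    simp
  obtain ⟨x, hx, hxe⟩ := MvPolynomial.combinatorial_nullstellensatz_exists_eval_nonzero f t hne
    hdegf (fun v => (L v).map Nat.castEmbedding) (by
      intro v
      rw [Finset.card_map, ht, sum_apply E (fun p => p.1) v]
      refine lt_of_le_of_lt ?_ ((hdeg v).trans_le (hL v))
      rw [← Set.ncard_coe_finset]
      refine Set.ncard_le_ncard_of_injOn Prod.snd ?_ ?_ (Set.toFinite _)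
      · rintro ⟨a, b⟩ h
        simp only [hE, Finset.coe_filter, Finset.mem_filter, Set.mem_ofPred_eq] at h ⊢
        obtain ⟨h, rfl⟩ := h
        exact h.2
      · rintro ⟨a, b⟩ h ⟨c, d⟩ h' hh
        simp only [Finset.coe_filter, Set.mem_ofPred_eq] at h h' hh
        rw [h.2, h'.2, hh])
  have hx' : ∀ v, ∃ n ∈ L v, (n : ℤ) = x v := fun v => by
    simpa using hx v
  choose φ hφ hφx using hx'
  rw [hf, map_prod, Finset.prod_ne_zero_iff] at hxe
  have key : ∀ u v, D u v → φ u ≠ φ v := by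
    intro u v huv h
    apply hxe (u, v) (by simpa [hE] using huv)
    simp [← hφx, h]
  refine ⟨φ, hφ, fun u v huv => ?_⟩
  by_cases h : D u v
  · exact key u v h
  · have : D v u := by
      by_contra h'
      exact h (((horient u v).1 huv).2 h')
    exact (key v u this).symm
end
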